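/- arXiv:1510.03044 — 10 statements merged into one kernel-verified Lean document; each statement's English description precedes it below -/
import Mathlib

section
/- Let n ≥ 1 and let D = diag(τ_1,…,τ_n) and R = diag(R_1,…,R_n) be real diagonal matrices with τ_i > 0 and R_i > 0 for all i. Let Y = Y_s + Y_c where Y_s = diag(G_11,…,G_nn) with G_ii ≥ 0, and Y_c is a real n×n matrix with nonpositive off-diagonal entries, nonnegative diagonal entries, and all row sums equal to zero. Then every eigenvalue λ ∈ ℂ of the matrix −D⁻¹(E + Y R) (E the n×n identity) satisfies Re λ ≤ −ψ, where ψ = min_{i} (1 + R_i G_ii)/τ_i. (Consequently the decentralized droop-controlled DC microgrid D İᵐ = −(E+YR)Iᵐ + YUᵈ is exponentially stable with decay rate at most −ψ.) -/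
open Matrix

/-- For the decentralized droop-controlled DC microgrid, every complex
eigenvalue of `-(D⁻¹ (E + Y R))` has real part at most `-ψ`, where
`ψ = min_i (1 + R_i G_ii)/τ_i`. -/
theorem droop_decentralized_eigenvalue_bound
    (n : ℕ) (hn : 0 < n)
    (τ Rv G : Fin n → ℝ)
    (hτ : ∀ i, 0 < τ i) (hR : ∀ i, 0 < Rv i) (hG : ∀ i, 0 ≤ G i)
    (Yc : Matrix (Fin n) (Fin n) ℝ)
    (hYcoff : ∀ i j, i ≠ j → Yc i j ≤ 0)
    (hYcdiag : ∀ i, 0 ≤ Yc i i)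
    (hYcrow : ∀ i, ∑ j, Yc i j = 0)
    (D R Ys Y : Matrix (Fin n) (Fin n) ℝ)
    (hD : D = Matrix.diagonal τ) (hRm : R = Matrix.diagonal Rv)
    (hYs : Ys = Matrix.diagonal G) (hY : Y = Ys + Yc)
    (ψ : ℝ)
    (hψ : ψ = Finset.univ.inf' ⟨⟨0, hn⟩, Finset.mem_univ _⟩
      (fun i => (1 + Rv i * G i) / τ i))
    (lam : ℂ) (v : Fin n → ℂ) (hv : v ≠ 0)
    (heig : ((-(D⁻¹ * (1 + Y * R))).map (Complex.ofReal)) *ᵥ v = lam • v) :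
    lam.re ≤ -ψ := by
  subst hD hRm hYs hY hψ
  haveI : Nonempty (Fin n) := ⟨⟨0, hn⟩⟩
  obtain ⟨i, hi⟩ := Finite.exists_max (fun i => ‖(Rv i : ℂ) * v i‖)
  have hinv : (Matrix.diagonal τ)⁻¹ = Matrix.diagonal (fun i => (τ i)⁻¹) := by
    apply Matrix.inv_eq_right_inv
    rw [Matrix.diagonal_mul_diagonal, ← Matrix.diagonal_one]
    congr 1
    funext k
    exact mul_inv_cancel₀ (hτ k).ne'
  have hwi : 0 < ‖(Rv i : ℂ) * v i‖ := by
    obtain ⟨k, hk⟩ := Function.ne_iff.mp hv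
    refine lt_of_lt_of_le ?_ (hi k)
    rw [norm_pos_iff]
    exact mul_ne_zero (by exact_mod_cast (hR k).ne') hk
  have hτi : (τ i : ℂ) ≠ 0 := by exact_mod_cast (hτ i).ne'
  have h1 := congrFun heig i
  have h2 : -((τ i : ℂ)⁻¹ * (v i + (G i * (Rv i * v i) + ∑ j, (Yc i j : ℂ) * (Rv j * v j))))
      = lam * v i := by
    rw [Pi.smul_apply, smul_eq_mul] at h1
    rw [← h1, hinv]
    simp only [Matrix.mulVec, dotProduct, Matrix.map_apply, Matrix.neg_apply,
      Matrix.diagonal_mul, Matrix.add_apply, Matrix.mul_diagonal]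
    have e : ∀ j, ((-((τ i)⁻¹ * ((1 : Matrix (Fin n) (Fin n) ℝ) i j
        + (Matrix.diagonal G i j + Yc i j) * Rv j)) : ℝ) : ℂ) * v j
        = -((τ i : ℂ)⁻¹ * ((if i = j then v j else 0)
          + ((if i = j then (G i : ℂ) * (Rv j * v j) else 0) + (Yc i j : ℂ) * (Rv j * v j)))) := by
      intro j
      rw [Matrix.one_apply, Matrix.diagonal_apply]
      split_ifs <;> push_cast <;> ring
    simp only [e]
    rw [Finset.sum_neg_distrib, ← Finset.mul_sum, Finset.sum_add_distrib,
      Finset.sum_add_distrib]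
    simp
  rw [← Finset.add_sum_erase _ _ (Finset.mem_univ i)] at h2
  set S := ∑ j ∈ Finset.univ.erase i, (Yc i j : ℂ) * (Rv j * v j) with hS
  have hrow : ∑ j ∈ Finset.univ.erase i, Yc i j = - Yc i i := by
    have := hYcrow i
    rw [← Finset.add_sum_erase _ _ (Finset.mem_univ i)] at this
    linarith
  have hSn : ‖S‖ ≤ Yc i i * ‖(Rv i : ℂ) * v i‖ := by
    have : ‖S‖ ≤ ∑ j ∈ Finset.univ.erase i, (-Yc i j) * ‖(Rv i : ℂ) * v i‖ := by
      refine norm_sum_le_of_le _ fun j hj => ?_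
      have hle := hYcoff i j (Finset.ne_of_mem_erase hj).symm
      rw [norm_mul, Complex.norm_real, Real.norm_of_nonpos hle]
      exact mul_le_mul_of_nonneg_left (hi j) (by linarith)
    rw [← Finset.sum_mul, Finset.sum_neg_distrib, hrow, neg_neg] at this
    exact this
  have h3 : (lam * τ i + ((1 + Rv i * G i + Rv i * Yc i i : ℝ) : ℂ)) * (Rv i * v i)
      = -((Rv i : ℂ) * S) := by
    have h4 : lam * v i * τ i = -(v i + (G i * (Rv i * v i) + (Yc i i * (Rv i * v i) + S))) := by
      rw [← h2]
      field_simp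
    push_cast
    linear_combination (Rv i : ℂ) * h4
  have h5 : ‖lam * τ i + ((1 + Rv i * G i + Rv i * Yc i i : ℝ) : ℂ)‖ ≤ Rv i * Yc i i := by
    refine le_of_mul_le_mul_right ?_ hwi
    rw [← norm_mul, h3, norm_neg, norm_mul, Complex.norm_real, Real.norm_of_nonneg (hR i).le,
      mul_assoc]
    exact mul_le_mul_of_nonneg_left hSn (hR i).le
  have h6 := (Complex.re_le_norm _).trans h5
  rw [Complex.add_re, Complex.ofReal_re, Complex.re_mul_ofReal] at h6
  have h7 : Finset.univ.inf' ⟨⟨0, hn⟩, Finset.mem_univ _⟩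
      (fun i => (1 + Rv i * G i) / τ i) ≤ (1 + Rv i * G i) / τ i :=
    Finset.inf'_le (fun i => (1 + Rv i * G i) / τ i) (Finset.mem_univ i)
  have h8 : (1 + Rv i * G i) / τ i ≤ -lam.re := by
    rw [div_le_iff₀ (hτ i)]
    linarith
  linarith
end

section
/- Let n ≥ 1, let Y_c be a real symmetric positive semidefinite n×n matrix with Y_c·1ₙ = 0 (1ₙ the all-ones vector), let g ≥ 0, r > 0, u_d ∈ ℝ, and set Y = gE + Y_c and R = rE (E the identity). Then E + Y R is invertible and the steady-state current vector I^ss = (E + Y R)⁻¹ Y (u_d·1ₙ) equals (g/(1+gr))·u_d·1ₙ; in particular all nodes carry the same steady-state current. -/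
open Matrix

/-- With uniform shunt conductance `g`, uniform droop resistance `r` and
common rated voltage `u_d·1ₙ`, the matrix `E + Y R` is invertible and the steady-state
current `(E + Y R)⁻¹ Y (u_d·1ₙ)` equals `(g/(1+gr))·u_d·1ₙ`. -/
theorem droop_uniform_steady_state_current
    (n : ℕ) (hn : 0 < n)
    (Yc : Matrix (Fin n) (Fin n) ℝ) (hYc : Yc.PosSemidef)
    (hYc1 : Yc *ᵥ (fun _ => (1 : ℝ)) = 0)
    (g r u_d : ℝ) (hg : 0 ≤ g) (hr : 0 < r)
    (Y R : Matrix (Fin n) (Fin n) ℝ)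
    (hY : Y = g • (1 : Matrix (Fin n) (Fin n) ℝ) + Yc)
    (hR : R = r • (1 : Matrix (Fin n) (Fin n) ℝ)) :
    IsUnit (1 + Y * R) ∧
      ((1 + Y * R)⁻¹ * Y) *ᵥ (fun _ => u_d) = fun _ => (g / (1 + g * r)) * u_d := by
  have hpos : 0 < 1 + g * r := by positivity
  have hconst : ∀ c : ℝ, Yc *ᵥ (fun _ => c) = 0 := by
    intro c
    have h : (fun _ : Fin n => c) = c • (fun _ : Fin n => (1 : ℝ)) := by
      ext i; simp
    rw [h, Matrix.mulVec_smul, hYc1, smul_zero]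
  have hYv : ∀ c : ℝ, Y *ᵥ (fun _ => c) = fun _ => g * c := by
    intro c
    rw [hY, Matrix.add_mulVec, hconst, Matrix.smul_mulVec, Matrix.one_mulVec, add_zero]
    ext i; simp
  have hA : 1 + Y * R = 1 + r • Y := by
    rw [hR, Matrix.mul_smul, Matrix.mul_one]
  have hY0 : Y.PosSemidef := by
    rw [hY]
    exact (Matrix.PosSemidef.one.smul hg).add hYc
  have hU : IsUnit (1 + Y * R) := by
    rw [hA]
    exact (Matrix.PosDef.one.add_posSemidef (hY0.smul hr.le)).isUnit
  refine ⟨hU, ?_⟩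
  have key : (1 + Y * R) *ᵥ (fun _ => (g / (1 + g * r)) * u_d) = Y *ᵥ (fun _ => u_d) := by
    rw [hA, Matrix.add_mulVec, Matrix.one_mulVec, Matrix.smul_mulVec, hYv, hYv]
    ext i
    simp only [Pi.add_apply, Pi.smul_apply, smul_eq_mul]
    field_simp
  rw [← Matrix.mulVec_mulVec, ← key, Matrix.mulVec_mulVec,
    Matrix.nonsing_inv_mul _ ((Matrix.isUnit_iff_isUnit_det _).mp hU), Matrix.one_mulVec]
end

section
/- Let a_m, b_m, a_d, b_d, a_k, b_k be real numbers with (a_m, b_m) ≠ (0, 0). Then every root λ ∈ ℂ of the quadratic equation (a_m + i·b_m)λ² + (a_d + i·b_d)λ + (a_k + i·b_k) = 0 has strictly negative real part if and only if both of the following hold: (i) b_m b_d + a_m a_d > 0, and (ii) (a_d a_k + b_d b_k)(a_m a_d + b_m b_d) > (a_m b_k − b_m a_k)². -/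
open Complex

/-- Routh–Hurwitz-type criterion for a scalar quadratic with complex
coefficients: every root of `(a_m + i b_m)λ² + (a_d + i b_d)λ + (a_k + i b_k) = 0` has
strictly negative real part iff `b_m b_d + a_m a_d > 0` and
`(a_d a_k + b_d b_k)(a_m a_d + b_m b_d) > (a_m b_k − b_m a_k)²`. -/
theorem quadratic_complex_roots_negative_real_part
    (a_m b_m a_d b_d a_k b_k : ℝ) (h : ¬(a_m = 0 ∧ b_m = 0)) :
    (∀ lam : ℂ,
        ((a_m : ℂ) + (b_m : ℂ) * Complex.I) * lam ^ 2
          + ((a_d : ℂ) + (b_d : ℂ) * Complex.I) * lam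
          + ((a_k : ℂ) + (b_k : ℂ) * Complex.I) = 0 → lam.re < 0)
    ↔ (b_m * b_d + a_m * a_d > 0 ∧
        (a_d * a_k + b_d * b_k) * (a_m * a_d + b_m * b_d)
          > (a_m * b_k - b_m * a_k) ^ 2) := by
  have hM : (a_m : ℂ) + (b_m : ℂ) * Complex.I ≠ 0 := by
    intro h0
    apply h
    have h1 := congrArg Complex.re h0
    have h2 := congrArg Complex.im h0
    simp at h1 h2
    exact ⟨h1, h2⟩
  have hN : 0 < a_m ^ 2 + b_m ^ 2 := by
    by_contra hc
    exact h ⟨by nlinarith [sq_nonneg a_m, sq_nonneg b_m], by nlinarith [sq_nonneg a_m, sq_nonneg b_m]⟩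
  obtain ⟨x, y, hD, hK⟩ : ∃ x y : ℂ,
      ((a_d : ℂ) + (b_d : ℂ) * Complex.I) = -(((a_m : ℂ) + (b_m : ℂ) * Complex.I) * (x + y)) ∧
      ((a_k : ℂ) + (b_k : ℂ) * Complex.I) = ((a_m : ℂ) + (b_m : ℂ) * Complex.I) * (x * y) := by
    generalize (a_m : ℂ) + (b_m : ℂ) * Complex.I = M at hM
    generalize (a_d : ℂ) + (b_d : ℂ) * Complex.I = D
    generalize (a_k : ℂ) + (b_k : ℂ) * Complex.I = K
    obtain ⟨z, hz⟩ := IsAlgClosed.exists_pow_nat_eq (D ^ 2 - 4 * M * K) (n := 2) (by norm_num)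
    refine ⟨(-D + z) / (2 * M), (-D - z) / (2 * M), ?_, ?_⟩
    · field_simp
      ring
    · field_simp
      linear_combination hz
  have hroots : (∀ lam : ℂ,
        ((a_m : ℂ) + (b_m : ℂ) * Complex.I) * lam ^ 2
          + ((a_d : ℂ) + (b_d : ℂ) * Complex.I) * lam
          + ((a_k : ℂ) + (b_k : ℂ) * Complex.I) = 0 → lam.re < 0) ↔ (x.re < 0 ∧ y.re < 0) := by
    rw [hD, hK]
    constructor
    · intro H
      exact ⟨H x (by ring), H y (by ring)⟩
    · rintro ⟨hx, hy⟩ l hl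
      have h3 : ((a_m : ℂ) + (b_m : ℂ) * Complex.I) * ((l - x) * (l - y)) = 0 := by
        linear_combination hl
      rcases mul_eq_zero.1 ((mul_eq_zero.1 h3).resolve_left hM) with h4 | h4
      · rwa [sub_eq_zero.1 h4]
      · rwa [sub_eq_zero.1 h4]
  rw [hroots]
  have d1 := congrArg Complex.re hD
  have d2 := congrArg Complex.im hD
  have k1 := congrArg Complex.re hK
  have k2 := congrArg Complex.im hK
  simp at d1 d2 k1 k2
  obtain ⟨p, u⟩ := x
  obtain ⟨q, v⟩ := y
  simp only at d1 d2 k1 k2 ⊢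
  have e1 : b_m * b_d + a_m * a_d = (a_m ^ 2 + b_m ^ 2) * (-(p + q)) := by
    rw [d1, d2]; ring
  have e2 : (a_d * a_k + b_d * b_k) * (a_m * a_d + b_m * b_d) - (a_m * b_k - b_m * a_k) ^ 2
      = (a_m ^ 2 + b_m ^ 2) ^ 2 * ((p * q) * ((p + q) ^ 2 + (u - v) ^ 2)) := by
    rw [d1, d2, k1, k2]; ring
  rw [gt_iff_lt, gt_iff_lt, ← sub_pos (b := (a_m * b_k - b_m * a_k) ^ 2), e1, e2,
    mul_pos_iff_of_pos_left hN, mul_pos_iff_of_pos_left (pow_pos hN 2)]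
  constructor
  · rintro ⟨hp, hq⟩
    have hs : 0 < (p + q) ^ 2 := by nlinarith
    exact ⟨by linarith, mul_pos (mul_pos_of_neg_of_neg hp hq) (by positivity)⟩
  · rintro ⟨hs, hpq⟩
    have h5 : 0 < p * q := pos_of_mul_pos_left hpq (by positivity)
    rcases mul_pos_iff.1 h5 with h6 | h6
    · linarith [h6.1, h6.2]
    · exact h6
end

section
/- Let n ≥ 2. Let Y_c and L be real symmetric n×n matrices with nonpositive off-diagonal entries and zero row sums (weighted graph Laplacians), each of rank n−1 (connected graphs). Let Y_s = diag(G_11,…,G_nn) with G_ii ≥ 0 and Y_s ≠ 0, set Y = Y_s + Y_c, and assume moreover that Y⁻¹ has entrywise nonnegative entries. Let D, R, Υ, Ψ be diagonal matrices with strictly positive diagonal entries and Φ a diagonal matrix with nonnegative diagonal entries. Then the closed-loop matrix A_c satisfies rank(A_c) = 2n − 1 and rank(A_c²) = 2n − 1; that is, 0 is a semisimple eigenvalue of A_c of algebraic multiplicity one. -/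
open Matrix

theorem ker_one_of_rank {m : Type*} [Fintype m] [DecidableEq m] (M : Matrix m m ℝ)
    (h : M.rank + 1 = Fintype.card m) (v : m → ℝ) (hv : v ≠ 0) (hMv : M *ᵥ v = 0)
    (z : m → ℝ) (hz : M *ᵥ z = 0) : ∃ c : ℝ, z = c • v := by
  have h1 := LinearMap.finrank_range_add_finrank_ker M.mulVecLin
  rw [Module.finrank_fintype_fun_eq_card] at h1
  have h2 : Module.finrank ℝ (LinearMap.ker M.mulVecLin) = 1 := by
    unfold Matrix.rank at h
    omega
  have hv' : (⟨v, by simpa using hMv⟩ : LinearMap.ker M.mulVecLin) ≠ 0 := by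
    intro h; exact hv (congrArg Subtype.val h)
  obtain ⟨c, hc⟩ := (finrank_eq_one_iff_of_nonzero' _ hv').1 h2 ⟨z, by simpa using hz⟩
  exact ⟨c, (congrArg Subtype.val hc).symm⟩

theorem rank_of_ker_one {m : Type*} [Fintype m] [DecidableEq m] (M : Matrix m m ℝ)
    (v : m → ℝ) (hv : v ≠ 0) (hMv : M *ᵥ v = 0)
    (hk : ∀ z : m → ℝ, M *ᵥ z = 0 → ∃ c : ℝ, z = c • v) : M.rank + 1 = Fintype.card m := by
  have h1 := LinearMap.finrank_range_add_finrank_ker M.mulVecLin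
  rw [Module.finrank_fintype_fun_eq_card] at h1
  have hv' : (⟨v, by simpa using hMv⟩ : LinearMap.ker M.mulVecLin) ≠ 0 := by
    intro h; exact hv (congrArg Subtype.val h)
  have h2 : Module.finrank ℝ (LinearMap.ker M.mulVecLin) = 1 := by
    rw [finrank_eq_one_iff_of_nonzero' _ hv']
    rintro ⟨z, hz⟩
    obtain ⟨c, hc⟩ := hk z (by simpa using hz)
    exact ⟨c, Subtype.ext hc.symm⟩
  unfold Matrix.rank
  omega


/-- When at least one shunt conductance is present (`Y_s ≠ 0`), the
closed-loop matrix `A_c` of the distributed cooperative droop control has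
`rank(A_c) = rank(A_c²) = 2n − 1`, so `0` is a semisimple eigenvalue of algebraic
multiplicity one. -/
theorem closedLoop_rank_shunt
    (n : ℕ) (hn : 2 ≤ n)
    (Yc L : Matrix (Fin n) (Fin n) ℝ)
    (hYcsym : Yc.IsSymm) (hLsym : L.IsSymm)
    (hYcoff : ∀ i j, i ≠ j → Yc i j ≤ 0) (hLoff : ∀ i j, i ≠ j → L i j ≤ 0)
    (hYcrow : ∀ i, ∑ j, Yc i j = 0) (hLrow : ∀ i, ∑ j, L i j = 0)
    (hYcrank : Yc.rank = n - 1) (hLrank : L.rank = n - 1)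
    (G : Fin n → ℝ) (hG : ∀ i, 0 ≤ G i)
    (Ys : Matrix (Fin n) (Fin n) ℝ) (hYs : Ys = Matrix.diagonal G) (hYsne : Ys ≠ 0)
    (Y : Matrix (Fin n) (Fin n) ℝ) (hY : Y = Ys + Yc)
    (hYunit : IsUnit Y.det) (hYinvnn : ∀ i j, 0 ≤ Y⁻¹ i j)
    (d r υ ψv φv : Fin n → ℝ)
    (hd : ∀ i, 0 < d i) (hr : ∀ i, 0 < r i) (hυ : ∀ i, 0 < υ i)
    (hψ : ∀ i, 0 < ψv i) (hφ : ∀ i, 0 ≤ φv i)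
    (D R Υ Ψ Φ : Matrix (Fin n) (Fin n) ℝ)
    (hD : D = Matrix.diagonal d) (hR : R = Matrix.diagonal r)
    (hΥ : Υ = Matrix.diagonal υ) (hΨ : Ψ = Matrix.diagonal ψv)
    (hΦ : Φ = Matrix.diagonal φv)
    (A_c : Matrix (Fin n ⊕ Fin n) (Fin n ⊕ Fin n) ℝ)
    (hA : A_c = Matrix.fromBlocks
      (-(D⁻¹ * (1 + Y * R))) (D⁻¹ * Y)
      (-(Ψ * L * Υ⁻¹) + Φ * L * Υ⁻¹ * D⁻¹ * (1 + Y * R)) (-(Φ * L * Υ⁻¹ * D⁻¹ * Y))) :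
    A_c.rank = 2 * n - 1 ∧ (A_c * A_c).rank = 2 * n - 1 := by
  have hinvd : ∀ a : Fin n → ℝ, (∀ i, 0 < a i) →
      (Matrix.diagonal a)⁻¹ = Matrix.diagonal (fun i => (a i)⁻¹) := by
    intro a ha
    apply Matrix.inv_eq_right_inv
    rw [Matrix.diagonal_mul_diagonal, ← Matrix.diagonal_one]
    congr 1
    funext i
    exact mul_inv_cancel₀ (ha i).ne'
  have hone : L *ᵥ (fun _ => (1 : ℝ)) = 0 := by
    funext i
    simpa [Matrix.mulVec, dotProduct] using hLrow i
  have i0 : Fin n := ⟨0, by omega⟩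
  have hone_ne : (fun _ : Fin n => (1 : ℝ)) ≠ 0 := fun h => one_ne_zero (congrFun h i0)
  have hLker := ker_one_of_rank L (by rw [hLrank, Fintype.card_fin]; omega) _ hone_ne hone
  have hcol : ∀ u : Fin n → ℝ, ∑ i, (L *ᵥ u) i = 0 := by
    intro u
    simp only [Matrix.mulVec, dotProduct]
    rw [Finset.sum_comm]
    apply Finset.sum_eq_zero
    intro j _
    rw [← Finset.sum_mul]
    have : ∑ i, L i j = ∑ i, L j i := Finset.sum_congr rfl fun i _ => hLsym.apply j i
    rw [this, hLrow, zero_mul]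
  have hDD : D * D⁻¹ = 1 := by
    rw [hD, hinvd d hd, Matrix.diagonal_mul_diagonal, ← Matrix.diagonal_one]
    congr 1; funext i; exact mul_inv_cancel₀ (hd i).ne'
  have hYY : Y⁻¹ * Y = 1 := Matrix.nonsing_inv_mul _ hYunit
  have hYY' : Y * Y⁻¹ = 1 := Matrix.mul_nonsing_inv _ hYunit
  let w : (Fin n → ℝ) → (Fin n → ℝ) → (Fin n → ℝ) := fun x y =>
    D⁻¹ *ᵥ (Y *ᵥ y - (x + Y *ᵥ (R *ᵥ x)))
  have hAv : ∀ x y, A_c *ᵥ (Sum.elim x y) = Sum.elim (w x y)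
      (-(Ψ *ᵥ (L *ᵥ (Υ⁻¹ *ᵥ x))) - Φ *ᵥ (L *ᵥ (Υ⁻¹ *ᵥ (w x y)))) := by
    intro x y
    rw [hA, Matrix.fromBlocks_mulVec]
    congr 1
    · simp only [w, Sum.elim_comp_inl, Sum.elim_comp_inr, Matrix.neg_mulVec,
        ← Matrix.mulVec_mulVec, Matrix.add_mulVec, Matrix.one_mulVec, Matrix.mulVec_sub]
      abel
    · simp only [w, Sum.elim_comp_inl, Sum.elim_comp_inr, Matrix.neg_mulVec,
        ← Matrix.mulVec_mulVec, Matrix.add_mulVec, Matrix.one_mulVec, Matrix.mulVec_sub]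
      abel
  have hw : ∀ x y p, w x y = p → y = Y⁻¹ *ᵥ (x + D *ᵥ p) + R *ᵥ x := by
    intro x y p h
    have h1 : D *ᵥ p = Y *ᵥ y - (x + Y *ᵥ (R *ᵥ x)) := by
      rw [← h]; simp only [w]; rw [Matrix.mulVec_mulVec, hDD, Matrix.one_mulVec]
    have h2 : x + D *ᵥ p = Y *ᵥ (y - R *ᵥ x) := by
      rw [h1, Matrix.mulVec_sub]; abel
    rw [h2, Matrix.mulVec_mulVec, hYY, Matrix.one_mulVec]; abel
  have hΥinv : ∀ x : Fin n → ℝ, ∀ i, (Υ⁻¹ *ᵥ x) i = (υ i)⁻¹ * x i := by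
    intro x i
    rw [hΥ, hinvd υ hυ, Matrix.mulVec_diagonal]
  have hΨv : ∀ x : Fin n → ℝ, ∀ i, (Ψ *ᵥ x) i = ψv i * x i := by
    intro x i
    rw [hΨ, Matrix.mulVec_diagonal]
  have hRv : ∀ x : Fin n → ℝ, ∀ i, (R *ᵥ x) i = r i * x i := by
    intro x i
    rw [hR, Matrix.mulVec_diagonal]
  have hΥυ : Υ⁻¹ *ᵥ υ = fun _ => (1 : ℝ) := by
    funext i
    rw [hΥinv, inv_mul_cancel₀ (hυ i).ne']
  let y0 : Fin n → ℝ := Y⁻¹ *ᵥ υ + R *ᵥ υ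
  have hy0 : ∀ i, 0 < y0 i := by
    intro i
    simp only [y0, Pi.add_apply, hRv]
    apply add_pos_of_nonneg_of_pos
    · simp only [Matrix.mulVec, dotProduct]
      exact Finset.sum_nonneg fun j _ => mul_nonneg (hYinvnn i j) (hυ j).le
    · exact mul_pos (hr i) (hυ i)
  let v : Fin n ⊕ Fin n → ℝ := Sum.elim υ y0
  have hv : v ≠ 0 := fun h => (hυ i0).ne' (congrFun h (Sum.inl i0))
  have hw0 : w υ y0 = 0 := by
    simp only [w, y0]
    rw [Matrix.mulVec_add, Matrix.mulVec_mulVec υ Y Y⁻¹, hYY', Matrix.one_mulVec, sub_self,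
      Matrix.mulVec_zero]
  have hAv0 : A_c *ᵥ v = 0 := by
    simp only [v]
    rw [hAv, hw0, hΥυ, hone]
    simp
  have hker : ∀ z, A_c *ᵥ z = 0 → ∃ c : ℝ, z = c • v := by
    intro z hz
    obtain ⟨x, y, rfl⟩ : ∃ x y, z = Sum.elim x y :=
      ⟨_, _, (Sum.elim_comp_inl_inr z).symm⟩
    rw [hAv] at hz
    have h1 : w x y = 0 := funext fun i => congrFun hz (Sum.inl i)
    have h2 : L *ᵥ (Υ⁻¹ *ᵥ x) = 0 := by
      funext i
      have := congrFun hz (Sum.inr i)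
      simp only [Sum.elim_inr, h1, Matrix.mulVec_zero, sub_zero, Pi.neg_apply, hΨv,
        Pi.zero_apply, neg_eq_zero, mul_eq_zero, (hψ i).ne', false_or] at this
      exact this
    obtain ⟨c, hc⟩ := hLker _ h2
    have hx : x = c • υ := by
      funext i
      have := congrFun hc i
      rw [hΥinv] at this
      simp only [Pi.smul_apply, smul_eq_mul, mul_one] at this ⊢
      rw [← this]
      have := (hυ i).ne'
      field_simp
    have hy := hw _ _ _ h1
    refine ⟨c, ?_⟩
    have hy' : y = c • y0 := by
      rw [hy, hx]
      simp only [y0, Matrix.mulVec_zero, add_zero, Matrix.mulVec_smul, smul_add]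
    rw [hx, hy']
    funext i
    cases i <;> rfl
  have hsq : ∀ z, A_c *ᵥ (A_c *ᵥ z) = 0 → A_c *ᵥ z = 0 := by
    intro z hz
    obtain ⟨c, hc⟩ := hker _ hz
    obtain ⟨x, y, rfl⟩ : ∃ x y, z = Sum.elim x y :=
      ⟨_, _, (Sum.elim_comp_inl_inr z).symm⟩
    have hc' := hc
    rw [hAv] at hc'
    have h1 : w x y = c • υ := funext fun i => congrFun hc' (Sum.inl i)
    have h2 : ∀ i, (L *ᵥ (Υ⁻¹ *ᵥ x)) i = -(c * (y0 i / ψv i)) := by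
      intro i
      have := congrFun hc' (Sum.inr i)
      simp only [Sum.elim_inr, h1, Matrix.mulVec_smul, hΥυ, hone, Matrix.mulVec_zero, smul_zero,
        sub_zero, Pi.neg_apply, hΨv, Pi.smul_apply, smul_eq_mul, v] at this
      have hp := (hψ i).ne'
      field_simp
      linarith
    have h3 := hcol (Υ⁻¹ *ᵥ x)
    simp only [h2] at h3
    rw [Finset.sum_neg_distrib, ← Finset.mul_sum, neg_eq_zero] at h3
    have hpos : 0 < ∑ i, y0 i / ψv i :=
      Finset.sum_pos (fun i _ => div_pos (hy0 i) (hψ i)) ⟨i0, Finset.mem_univ _⟩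
    have hc0 : c = 0 := (mul_eq_zero.1 h3).resolve_right hpos.ne'
    rw [hc, hc0, zero_smul]
  have r1 := rank_of_ker_one A_c v hv hAv0 hker
  have r2 := rank_of_ker_one (A_c * A_c) v hv
    (by rw [← Matrix.mulVec_mulVec, hAv0, Matrix.mulVec_zero])
    (fun z hz => hker z (hsq z (by rw [Matrix.mulVec_mulVec]; exact hz)))
  rw [Fintype.card_sum, Fintype.card_fin] at r1 r2
  constructor <;> omega
end

section
/- Let n ≥ 2. Let Y_c and L be real symmetric n×n matrices with nonpositive off-diagonal entries and zero row sums (weighted graph Laplacians), each of rank n−1 (connected graphs). Suppose there are no shunt conductances, i.e. Y = Y_c (singular). Let D, R, Υ, Ψ be diagonal matrices with strictly positive diagonal entries and Φ a diagonal matrix with nonnegative diagonal entries. Then the closed-loop matrix A_c satisfies rank(A_c) = 2n − 1 and rank(A_c²) = 2n − 1; that is, 0 is a semisimple eigenvalue of A_c of algebraic multiplicity one, and the kernel of A_c is spanned by the vector (0, 1ₙ) ∈ ℝ^{2n}. -/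
open Matrix

lemma aux_rank {ι : Type*} [Fintype ι] [DecidableEq ι] (M : Matrix ι ι ℝ) (w : ι → ℝ)
    (hw : w ≠ 0) (hM : M *ᵥ w = 0) :
    M.rank + 1 = Fintype.card ι ↔ ∀ v, M *ᵥ v = 0 → ∃ c : ℝ, v = c • w := by
  have h1 := LinearMap.finrank_range_add_finrank_ker M.mulVecLin
  rw [Module.finrank_fintype_fun_eq_card] at h1
  have h2 : M.rank = Module.finrank ℝ (LinearMap.range M.mulVecLin) := rfl
  have h3 : M.rank + 1 = Fintype.card ι ↔
      Module.finrank ℝ (LinearMap.ker M.mulVecLin) = 1 := by omega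
  rw [h3]
  have hmem : w ∈ LinearMap.ker M.mulVecLin := by simpa using hM
  rw [finrank_eq_one_iff_of_nonzero' (⟨w, hmem⟩ : LinearMap.ker M.mulVecLin)
    (by intro h; exact hw (congrArg Subtype.val h))]
  constructor
  · intro h v hv
    obtain ⟨c, hc⟩ := h ⟨v, by simpa using hv⟩
    exact ⟨c, (congrArg Subtype.val hc).symm⟩
  · rintro h ⟨v, hv⟩
    obtain ⟨c, hc⟩ := h v (by simpa using hv)
    exact ⟨c, Subtype.ext hc.symm⟩

lemma aux_inv {n : ℕ} (d : Fin n → ℝ) (hd : ∀ i, 0 < d i) :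
    (Matrix.diagonal d)⁻¹ = Matrix.diagonal (fun i => (d i)⁻¹) := by
  apply Matrix.inv_eq_right_inv
  rw [Matrix.diagonal_mul_diagonal, ← Matrix.diagonal_one]
  congr 1
  funext i
  exact mul_inv_cancel₀ (hd i).ne'

lemma aux_sum {n : ℕ} (M : Matrix (Fin n) (Fin n) ℝ) (hs : M.IsSymm)
    (hrow : ∀ i, ∑ j, M i j = 0) (v : Fin n → ℝ) : ∑ i, (M *ᵥ v) i = 0 := by
  simp only [Matrix.mulVec, dotProduct]
  rw [Finset.sum_comm]
  apply Finset.sum_eq_zero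
  intro j _
  rw [← Finset.sum_mul]
  have : ∑ i, M i j = 0 := by
    rw [← hrow j]
    exact Finset.sum_congr rfl fun i _ => hs.apply j i
  rw [this, zero_mul]

/-- With no shunt conductances (`Y = Y_c` singular), the closed-loop
matrix `A_c` has `rank(A_c) = rank(A_c²) = 2n − 1`, so `0` is a semisimple eigenvalue of
algebraic multiplicity one, and the kernel of `A_c` is spanned by `(0, 1ₙ)`. -/
theorem closedLoop_rank_no_shunt
    (n : ℕ) (hn : 2 ≤ n)
    (Yc L : Matrix (Fin n) (Fin n) ℝ)
    (hYcsym : Yc.IsSymm) (hLsym : L.IsSymm)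
    (hYcoff : ∀ i j, i ≠ j → Yc i j ≤ 0) (hLoff : ∀ i j, i ≠ j → L i j ≤ 0)
    (hYcrow : ∀ i, ∑ j, Yc i j = 0) (hLrow : ∀ i, ∑ j, L i j = 0)
    (hYcrank : Yc.rank = n - 1) (hLrank : L.rank = n - 1)
    (Y : Matrix (Fin n) (Fin n) ℝ) (hY : Y = Yc)
    (d r υ ψv φv : Fin n → ℝ)
    (hd : ∀ i, 0 < d i) (hr : ∀ i, 0 < r i) (hυ : ∀ i, 0 < υ i)
    (hψ : ∀ i, 0 < ψv i) (hφ : ∀ i, 0 ≤ φv i)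
    (D R Υ Ψ Φ : Matrix (Fin n) (Fin n) ℝ)
    (hD : D = Matrix.diagonal d) (hR : R = Matrix.diagonal r)
    (hΥ : Υ = Matrix.diagonal υ) (hΨ : Ψ = Matrix.diagonal ψv)
    (hΦ : Φ = Matrix.diagonal φv)
    (A_c : Matrix (Fin n ⊕ Fin n) (Fin n ⊕ Fin n) ℝ)
    (hA : A_c = Matrix.fromBlocks
      (-(D⁻¹ * (1 + Y * R))) (D⁻¹ * Y)
      (-(Ψ * L * Υ⁻¹) + Φ * L * Υ⁻¹ * D⁻¹ * (1 + Y * R)) (-(Φ * L * Υ⁻¹ * D⁻¹ * Y))) :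
    A_c.rank = 2 * n - 1 ∧ (A_c * A_c).rank = 2 * n - 1 ∧
      (∀ v : Fin n ⊕ Fin n → ℝ, A_c *ᵥ v = 0 ↔
        ∃ c : ℝ, v = c • Sum.elim (0 : Fin n → ℝ) (fun _ => (1 : ℝ))) := by
  have hne : Nonempty (Fin n) := ⟨⟨0, by omega⟩⟩
  have h1ne : (fun _ => (1 : ℝ) : Fin n → ℝ) ≠ 0 := by
    intro h
    have := congrFun h hne.some
    simp at this
  have row1 : ∀ M : Matrix (Fin n) (Fin n) ℝ, (∀ i, ∑ j, M i j = 0) →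
      M *ᵥ (fun _ => (1 : ℝ)) = 0 := by
    intro M h
    funext i
    simpa [Matrix.mulVec, dotProduct] using h i
  have kerY := (aux_rank Yc _ h1ne (row1 Yc hYcrow)).1 (by rw [hYcrank, Fintype.card_fin]; omega)
  have kerL := (aux_rank L _ h1ne (row1 L hLrow)).1 (by rw [hLrank, Fintype.card_fin]; omega)
  subst hY
  rw [hD, hΥ, aux_inv d hd, aux_inv υ hυ, hΨ, hΦ, hR] at hA
  -- action of the closed-loop matrix
  have act : ∀ x y : Fin n → ℝ, ∃ u : Fin n → ℝ,
      (∀ i, u i = (d i)⁻¹ * ((Y *ᵥ y) i - x i - (Y *ᵥ (fun j => r j * x j)) i)) ∧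
      A_c *ᵥ (Sum.elim x y) = Sum.elim u (fun i =>
        -(ψv i * (L *ᵥ (fun j => (υ j)⁻¹ * x j)) i)
          - φv i * (L *ᵥ (fun j => (υ j)⁻¹ * u j)) i) := by
    intro x y
    have dm : ∀ a b : Fin n → ℝ, Matrix.diagonal a *ᵥ b = fun j => a j * b j := by
      intro a b
      funext j
      exact Matrix.mulVec_diagonal a b j
    refine ⟨_, fun i => rfl, ?_⟩
    have hu : (fun j => (υ j)⁻¹ * ((d j)⁻¹ *
          ((Y *ᵥ y) j - x j - (Y *ᵥ (fun j => r j * x j)) j)))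
        = (fun j => (υ j)⁻¹ * ((d j)⁻¹ * (Y *ᵥ y) j))
          - (fun j => (υ j)⁻¹ * ((d j)⁻¹ * (x j + (Y *ᵥ (fun j => r j * x j)) j))) := by
      funext j
      simp only [Pi.sub_apply]
      ring
    rw [hu, Matrix.mulVec_sub, hA, Matrix.fromBlocks_mulVec]
    simp only [Sum.elim_comp_inl, Sum.elim_comp_inr, Matrix.add_mulVec, Matrix.neg_mulVec,
      ← Matrix.mulVec_mulVec, Matrix.one_mulVec, dm]
    congr 1
    · funext i
      simp only [Pi.add_apply, Pi.neg_apply]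
      ring
    · funext i
      simp only [Pi.add_apply, Pi.neg_apply, Pi.sub_apply]
      ring
  have hker0 : A_c *ᵥ Sum.elim (0 : Fin n → ℝ) (fun _ => (1 : ℝ)) = 0 := by
    obtain ⟨u, hu, h⟩ := act 0 (fun _ => 1)
    have hz : (fun j => r j * (0 : Fin n → ℝ) j) = 0 := by funext j; simp
    have hu0 : u = 0 := by
      funext i
      rw [hu, row1 Y hYcrow, hz]
      simp
    have hz2 : (fun j => (υ j)⁻¹ * (0 : Fin n → ℝ) j) = 0 := by funext j; simp
    rw [h, hu0, hz2]
    funext i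
    rcases i with i | i <;> simp
  have key : ∀ (v : Fin n ⊕ Fin n → ℝ) (c : ℝ),
      A_c *ᵥ v = c • Sum.elim (0 : Fin n → ℝ) (fun _ => (1 : ℝ)) →
      c = 0 ∧ ∃ c' : ℝ, v = c' • Sum.elim (0 : Fin n → ℝ) (fun _ => (1 : ℝ)) := by
    intro v c hv
    obtain ⟨x, y, rfl⟩ : ∃ x y : Fin n → ℝ, v = Sum.elim x y :=
      ⟨v ∘ Sum.inl, v ∘ Sum.inr, (Sum.elim_comp_inl_inr v).symm⟩
    obtain ⟨u, hu, h⟩ := act x y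
    rw [h] at hv
    have hu0 : u = 0 := by
      funext i
      simpa using congrFun hv (Sum.inl i)
    have hz2 : (fun j => (υ j)⁻¹ * (0 : Fin n → ℝ) j) = 0 := by funext j; simp
    have hb : ∀ i, -(ψv i * (L *ᵥ (fun j => (υ j)⁻¹ * x j)) i) = c := by
      intro i
      have := congrFun hv (Sum.inr i)
      rw [hu0, hz2] at this
      simpa using this
    have hb' : ∀ i, (L *ᵥ (fun j => (υ j)⁻¹ * x j)) i = -c * (ψv i)⁻¹ := by
      intro i
      have := (hψ i).ne'
      rw [← hb i]
      field_simp
    have hc : c = 0 := by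
      have hs := aux_sum L hLsym hLrow (fun j => (υ j)⁻¹ * x j)
      rw [Finset.sum_congr rfl (fun i _ => hb' i), ← Finset.mul_sum] at hs
      have hp : 0 < ∑ i, (ψv i)⁻¹ :=
        Finset.sum_pos (fun i _ => inv_pos.2 (hψ i)) Finset.univ_nonempty
      rcases mul_eq_zero.1 hs with h | h
      · linarith
      · exact absurd h hp.ne'
    refine ⟨hc, ?_⟩
    obtain ⟨k, hk⟩ := kerL (fun j => (υ j)⁻¹ * x j) (by funext i; rw [hb', hc]; simp)
    have hx : ∀ i, x i = k * υ i := by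
      intro i
      have h1 := congrFun hk i
      have := (hυ i).ne'
      simp only [Pi.smul_apply, smul_eq_mul, mul_one] at h1
      rw [← h1]
      field_simp
    have htop : ∀ i, x i = (Y *ᵥ y) i - (Y *ᵥ (fun j => r j * x j)) i := by
      intro i
      have h1 := hu i
      rw [hu0] at h1
      rcases mul_eq_zero.1 h1.symm with h | h
      · exact absurd h (inv_pos.2 (hd i)).ne'
      · linarith
    have hk0 : k = 0 := by
      have hs : ∑ i, x i = 0 := by
        rw [Finset.sum_congr rfl (fun i _ => htop i), Finset.sum_sub_distrib,
          aux_sum Y hYcsym hYcrow, aux_sum Y hYcsym hYcrow, sub_zero]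
      rw [Finset.sum_congr rfl (fun i _ => hx i), ← Finset.mul_sum] at hs
      have hp : 0 < ∑ i, υ i := Finset.sum_pos (fun i _ => hυ i) Finset.univ_nonempty
      rcases mul_eq_zero.1 hs with h | h
      · exact h
      · exact absurd h hp.ne'
    have hx0 : x = 0 := by
      funext i
      rw [hx, hk0]
      simp
    have hz : (fun j => r j * (0 : Fin n → ℝ) j) = 0 := by funext j; simp
    obtain ⟨c', hc'⟩ := kerY y (by
      funext i
      have := htop i
      rw [hx0, hz] at this
      simpa using this.symm)
    refine ⟨c', ?_⟩
    rw [hx0, hc']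
    funext i
    rcases i with i | i <;> simp
  have wne : Sum.elim (0 : Fin n → ℝ) (fun _ : Fin n => (1 : ℝ)) ≠ 0 := by
    intro h
    have := congrFun h (Sum.inr hne.some)
    simp at this
  have ker1 : ∀ v, A_c *ᵥ v = 0 →
      ∃ c : ℝ, v = c • Sum.elim (0 : Fin n → ℝ) (fun _ => (1 : ℝ)) := by
    intro v hv
    exact (key v 0 (by rw [hv, zero_smul])).2
  have hcard : Fintype.card (Fin n ⊕ Fin n) = 2 * n := by
    rw [Fintype.card_sum, Fintype.card_fin]; omega
  refine ⟨?_, ?_, ?_⟩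
  · have := (aux_rank A_c _ wne hker0).2 ker1
    omega
  · have := (aux_rank (A_c * A_c) _ wne (by
      rw [← Matrix.mulVec_mulVec, hker0, Matrix.mulVec_zero])).2 (by
        intro v hv
        rw [← Matrix.mulVec_mulVec] at hv
        obtain ⟨c, hc⟩ := ker1 _ hv
        exact (key v c hc).2)
    omega
  · intro v
    refine ⟨ker1 v, ?_⟩
    rintro ⟨c, rfl⟩
    rw [Matrix.mulVec_smul, hker0, smul_zero]
end

section
/- Let n ≥ 1, let Y be an invertible real n×n matrix, let L be a real symmetric n×n matrix with L·1ₙ = 0, and let D, R, Υ, Φ, Ψ be real diagonal n×n matrices with D, Υ, Ψ invertible. Define v_r = (Υ·1ₙ, (Y⁻¹ + R)·Υ·1ₙ) ∈ ℝ^{2n} and v_l = (Υ⁻¹LΦΨ⁻¹·1ₙ, Ψ⁻¹·1ₙ) ∈ ℝ^{2n}. Then A_c·v_r = 0 and A_cᵀ·v_l = 0; that is, v_r is a right eigenvector and v_l a left eigenvector of the closed-loop matrix A_c associated with the eigenvalue 0. -/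
open Matrix

/-- `v_r = (Υ1ₙ, (Y⁻¹+R)Υ1ₙ)` is a right eigenvector and
`v_l = (Υ⁻¹LΦΨ⁻¹1ₙ, Ψ⁻¹1ₙ)` a left eigenvector of the closed-loop matrix `A_c`
associated with the eigenvalue `0`. -/
theorem closedLoop_zero_eigenvectors
    (n : ℕ) (hn : 0 < n)
    (Y : Matrix (Fin n) (Fin n) ℝ) (hYunit : IsUnit Y.det)
    (L : Matrix (Fin n) (Fin n) ℝ) (hLsym : L.IsSymm)
    (hL1 : L *ᵥ (fun _ => (1 : ℝ)) = 0)
    (d r υ φv ψv : Fin n → ℝ)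
    (hd : ∀ i, d i ≠ 0) (hυ : ∀ i, υ i ≠ 0) (hψ : ∀ i, ψv i ≠ 0)
    (D R Υ Φ Ψ : Matrix (Fin n) (Fin n) ℝ)
    (hD : D = Matrix.diagonal d) (hR : R = Matrix.diagonal r)
    (hΥ : Υ = Matrix.diagonal υ) (hΦ : Φ = Matrix.diagonal φv)
    (hΨ : Ψ = Matrix.diagonal ψv)
    (A_c : Matrix (Fin n ⊕ Fin n) (Fin n ⊕ Fin n) ℝ)
    (hA : A_c = Matrix.fromBlocks
      (-(D⁻¹ * (1 + Y * R))) (D⁻¹ * Y)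
      (-(Ψ * L * Υ⁻¹) + Φ * L * Υ⁻¹ * D⁻¹ * (1 + Y * R)) (-(Φ * L * Υ⁻¹ * D⁻¹ * Y)))
    (v_r v_l : Fin n ⊕ Fin n → ℝ)
    (hvr : v_r = Sum.elim (Υ *ᵥ (fun _ => (1 : ℝ)))
      (((Y⁻¹ + R) * Υ) *ᵥ (fun _ => (1 : ℝ))))
    (hvl : v_l = Sum.elim ((Υ⁻¹ * L * Φ * Ψ⁻¹) *ᵥ (fun _ => (1 : ℝ)))
      (Ψ⁻¹ *ᵥ (fun _ => (1 : ℝ)))) :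
    A_c *ᵥ v_r = 0 ∧ A_cᵀ *ᵥ v_l = 0 := by
  have hΥu : IsUnit Υ.det := by
    rw [hΥ, det_diagonal]
    exact (Finset.prod_ne_zero_iff.mpr fun i _ => hυ i).isUnit
  have hΨu : IsUnit Ψ.det := by
    rw [hΨ, det_diagonal]
    exact (Finset.prod_ne_zero_iff.mpr fun i _ => hψ i).isUnit
  have hDt : Dᵀ = D := by rw [hD, diagonal_transpose]
  have hΥt : Υᵀ = Υ := by rw [hΥ, diagonal_transpose]
  have hΦt : Φᵀ = Φ := by rw [hΦ, diagonal_transpose]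
  have hΨt : Ψᵀ = Ψ := by rw [hΨ, diagonal_transpose]
  have hLt : Lᵀ = L := hLsym
  have e1 : Υ⁻¹ * Υ = 1 := nonsing_inv_mul _ hΥu
  have e2 : Ψ * Ψ⁻¹ = 1 := mul_nonsing_inv _ hΨu
  have e3 : Y * Y⁻¹ = 1 := mul_nonsing_inv _ hYunit
  have k : (1 + Y * R) * Υ = Y * ((Y⁻¹ + R) * Υ) := by
    rw [← Matrix.mul_assoc, Matrix.mul_add, e3]
  have z : ∀ M : Matrix (Fin n) (Fin n) ℝ, (M * L) *ᵥ (fun _ => (1 : ℝ)) = 0 := by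
    intro M
    rw [← mulVec_mulVec, hL1, mulVec_zero]
  clear hD hR hΥ hΦ hΨ
  subst hA hvr hvl
  constructor
  · rw [fromBlocks_mulVec]
    simp only [Sum.elim_comp_inl, Sum.elim_comp_inr, mulVec_mulVec, ← add_mulVec]
    have a1 : -(D⁻¹ * (1 + Y * R)) * Υ + D⁻¹ * Y * ((Y⁻¹ + R) * Υ) = 0 := by
      rw [Matrix.mul_assoc D⁻¹ Y, ← k]; noncomm_ring
    have a2 : (-(Ψ * L * Υ⁻¹) + Φ * L * Υ⁻¹ * D⁻¹ * (1 + Y * R)) * Υ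
        + -(Φ * L * Υ⁻¹ * D⁻¹ * Y) * ((Y⁻¹ + R) * Υ) = (-Ψ) * L := by
      rw [Matrix.neg_mul (Φ * L * Υ⁻¹ * D⁻¹ * Y), Matrix.mul_assoc _ Y, ← k, Matrix.add_mul,
        Matrix.neg_mul, Matrix.mul_assoc _ Υ⁻¹ Υ, e1, Matrix.mul_assoc _ (1 + Y * R) Υ]
      simp
    rw [a1, a2, z, zero_mulVec]
    ext i; cases i <;> rfl
  · rw [fromBlocks_transpose, fromBlocks_mulVec]
    simp only [Sum.elim_comp_inl, Sum.elim_comp_inr, mulVec_mulVec, ← add_mulVec]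
    simp only [transpose_neg, transpose_add, transpose_mul, transpose_nonsing_inv, hDt, hΥt, hΦt,
      hΨt, hLt]
    generalize (1 : Matrix (Fin n) (Fin n) ℝ)ᵀ + Rᵀ * Yᵀ = P
    have a1 : -(P * D⁻¹) * (Υ⁻¹ * L * Φ * Ψ⁻¹)
        + (-(Υ⁻¹ * (L * Ψ)) + P * (D⁻¹ * (Υ⁻¹ * (L * Φ)))) * Ψ⁻¹ = (-Υ⁻¹) * L := by
      have : -(Υ⁻¹ * (L * Ψ)) * Ψ⁻¹ = (-Υ⁻¹) * L := by
        rw [Matrix.neg_mul, Matrix.mul_assoc, Matrix.mul_assoc, e2]; simp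
      rw [Matrix.add_mul, this]
      simp only [Matrix.mul_assoc, Matrix.neg_mul]
      abel
    have a2 : Yᵀ * D⁻¹ * (Υ⁻¹ * L * Φ * Ψ⁻¹)
        + -(Yᵀ * (D⁻¹ * (Υ⁻¹ * (L * Φ)))) * Ψ⁻¹ = 0 := by
      simp only [Matrix.mul_assoc, Matrix.neg_mul]
      abel
    rw [a1, a2, z, zero_mulVec]
    ext i; cases i <;> rfl
end

section
/- Let n ≥ 1, let Y be a real symmetric positive definite n×n matrix whose inverse Y⁻¹ is entrywise nonnegative, let R, Ψ, Υ be real diagonal matrices with strictly positive diagonals, and let Uᵈ(0) ∈ ℝⁿ. Define the decentralized steady current-ratio vector R^Dec = Υ⁻¹(E + YR)⁻¹Y·Uᵈ(0) and the cooperative steady current ratio r_{c1} = [1ₙᵀΨ⁻¹Uᵈ(0)] / [1ₙᵀΨ⁻¹(Y⁻¹+R)Υ·1ₙ]. Then min_j (R^Dec)_j ≤ r_{c1} ≤ max_j (R^Dec)_j; moreover, if (R^Dec)_j < 1 for every j, then r_{c1} < 1. -/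
open Matrix

/-- The cooperative steady current ratio `r_{c1}` lies between the
minimal and maximal components of the decentralized steady current-ratio vector `R^Dec`;
if every component of `R^Dec` is less than `1`, then `r_{c1} < 1`. -/
theorem cooperative_ratio_between_decentralized_ratios
    (n : ℕ) (hn : 0 < n)
    (Y : Matrix (Fin n) (Fin n) ℝ) (hYsym : Y.IsSymm) (hYpd : Y.PosDef)
    (hYinvnn : ∀ i j, 0 ≤ Y⁻¹ i j)
    (r ψv υ : Fin n → ℝ)
    (hr : ∀ i, 0 < r i) (hψ : ∀ i, 0 < ψv i) (hυ : ∀ i, 0 < υ i)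
    (R Ψ Υ : Matrix (Fin n) (Fin n) ℝ)
    (hR : R = Matrix.diagonal r) (hΨ : Ψ = Matrix.diagonal ψv)
    (hΥ : Υ = Matrix.diagonal υ)
    (Ud0 : Fin n → ℝ)
    (RDec : Fin n → ℝ)
    (hRDec : RDec = (Υ⁻¹ * ((1 + Y * R)⁻¹ * Y)) *ᵥ Ud0)
    (rc1 : ℝ)
    (hrc1 : rc1 = ((fun _ => (1 : ℝ)) ⬝ᵥ (Ψ⁻¹ *ᵥ Ud0)) /
      ((fun _ => (1 : ℝ)) ⬝ᵥ (Ψ⁻¹ *ᵥ (((Y⁻¹ + R) * Υ) *ᵥ (fun _ => (1 : ℝ)))))) :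
    (Finset.univ.inf' ⟨⟨0, hn⟩, Finset.mem_univ _⟩ RDec ≤ rc1 ∧
      rc1 ≤ Finset.univ.sup' ⟨⟨0, hn⟩, Finset.mem_univ _⟩ RDec) ∧
    ((∀ j, RDec j < 1) → rc1 < 1) := by
  have hYu : IsUnit Y.det := hYpd.det_pos.ne'.isUnit
  have hRpd : R.PosDef := by rw [hR]; exact Matrix.PosDef.diagonal hr
  have hSpd : (Y⁻¹ + R).PosDef := hYpd.inv.add hRpd
  have hfac : 1 + Y * R = Y * (Y⁻¹ + R) := by
    rw [mul_add, Matrix.mul_nonsing_inv _ hYu]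
  have hu : IsUnit (1 + Y * R).det := by
    rw [hfac, Matrix.det_mul]
    exact hYu.mul hSpd.det_pos.ne'.isUnit
  have hΥu : IsUnit Υ.det := by
    rw [hΥ, Matrix.det_diagonal]
    exact (Finset.prod_pos fun i _ => hυ i).ne'.isUnit
  have hΨi : Ψ⁻¹ = Matrix.diagonal (fun i => (ψv i)⁻¹) := by
    apply Matrix.inv_eq_right_inv
    rw [hΨ, Matrix.diagonal_mul_diagonal, ← Matrix.diagonal_one]
    congr 1
    funext i
    exact mul_inv_cancel₀ (hψ i).ne'
  have hS : Y⁻¹ + R = Y⁻¹ * (1 + Y * R) := by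
    rw [mul_add, mul_one, ← mul_assoc, Matrix.nonsing_inv_mul _ hYu, one_mul]
  have hM : ((Y⁻¹ + R) * Υ) * (Υ⁻¹ * ((1 + Y * R)⁻¹ * Y)) = 1 := by
    rw [mul_assoc, Matrix.mul_nonsing_inv_cancel_left _ _ hΥu, hS, mul_assoc,
      Matrix.mul_nonsing_inv_cancel_left _ _ hu, Matrix.nonsing_inv_mul _ hYu]
  have hU : Ud0 = ((Y⁻¹ + R) * Υ) *ᵥ RDec := by
    rw [hRDec, Matrix.mulVec_mulVec, hM, Matrix.one_mulVec]
  obtain ⟨w, hw⟩ : ∃ w, w = ((fun _ => (1 : ℝ)) ᵥ* Ψ⁻¹) ᵥ* ((Y⁻¹ + R) * Υ) := ⟨_, rfl⟩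
  have hdot : ∀ v : Fin n → ℝ, (fun _ => (1 : ℝ)) ⬝ᵥ (Ψ⁻¹ *ᵥ (((Y⁻¹ + R) * Υ) *ᵥ v))
      = ∑ j, w j * v j := by
    intro v
    rw [Matrix.dotProduct_mulVec, Matrix.dotProduct_mulVec, ← hw]
    rfl
  have hwpos : ∀ j, 0 < w j := by
    intro j
    have e : w j = ∑ i, (ψv i)⁻¹ * ((Y⁻¹ i j + R i j) * υ j) := by
      rw [hw, hΨi, hΥ]
      simp [Matrix.vecMul, dotProduct, Matrix.mul_diagonal, Matrix.diagonal_apply]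
    have hRnn : ∀ i, 0 ≤ R i j := by
      intro i
      rw [hR, Matrix.diagonal_apply]
      split_ifs
      · exact (hr i).le
      · exact le_rfl
    rw [e]
    apply Finset.sum_pos'
    · intro i _
      exact mul_nonneg (inv_pos.2 (hψ i)).le
        (mul_nonneg (add_nonneg (hYinvnn i j) (hRnn i)) (hυ j).le)
    · refine ⟨j, Finset.mem_univ _, mul_pos (inv_pos.2 (hψ j)) (mul_pos ?_ (hυ j))⟩
      have : R j j = r j := by rw [hR, Matrix.diagonal_apply_eq]
      rw [this]
      exact add_pos_of_nonneg_of_pos (hYinvnn j j) (hr j)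
  have hne : (Finset.univ : Finset (Fin n)).Nonempty := ⟨⟨0, hn⟩, Finset.mem_univ _⟩
  have hW : 0 < ∑ j, w j := Finset.sum_pos (fun j _ => hwpos j) hne
  have hrc : rc1 = (∑ j, w j * RDec j) / ∑ j, w j := by
    rw [hrc1, hdot, hU, hdot]
    simp
  have hle : rc1 ≤ Finset.univ.sup' hne RDec := by
    rw [hrc, div_le_iff₀ hW, Finset.mul_sum]
    refine Finset.sum_le_sum fun j hj => ?_
    rw [mul_comm]
    exact mul_le_mul_of_nonneg_right (Finset.le_sup' RDec hj) (hwpos j).le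
  refine ⟨⟨?_, hle⟩, ?_⟩
  · rw [hrc, le_div_iff₀ hW, Finset.mul_sum]
    refine Finset.sum_le_sum fun j hj => ?_
    rw [mul_comm (w j)]
    exact mul_le_mul_of_nonneg_right (Finset.inf'_le RDec hj) (hwpos j).le
  · intro h
    exact hle.trans_lt ((Finset.sup'_lt_iff hne).2 fun j _ => h j)
end

section
/- Let n ≥ 1, let Y be a real symmetric positive definite n×n matrix whose inverse Y⁻¹ is entrywise nonnegative, let R, Ψ, Υ be real diagonal matrices with strictly positive diagonals, and let Uᵈ(0) ∈ ℝⁿ. Define R^Dec = Υ⁻¹(E+YR)⁻¹Y·Uᵈ(0) and r_{c1} = 1ₙᵀΨ⁻¹Uᵈ(0) / 1ₙᵀΨ⁻¹(Y⁻¹+R)Υ·1ₙ, and suppose every component of R^Dec is strictly positive and r_{c1} ≥ 0. Let R̲ = min_j (R^Dec)_j and R̄ = max_j (R^Dec)_j, and define U^ss = Y⁻¹Υ·R^Dec (the decentralized steady voltage vector) and U = r_{c1}·Y⁻¹Υ·1ₙ (the cooperative steady voltage vector). Then componentwise (r_{c1}/R̄)·U^ss ≤ U ≤ (r_{c1}/R̲)·U^ss.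 -/
open Matrix

/-- Componentwise bounds relating the cooperative steady voltage
`U = r_{c1}·Y⁻¹Υ1ₙ` and the decentralized steady voltage `U^ss = Y⁻¹Υ·R^Dec`:
`(r_{c1}/R̄)·U^ss ≤ U ≤ (r_{c1}/R̲)·U^ss`. -/
theorem cooperative_voltage_between_decentralized_voltages
    (n : ℕ) (hn : 0 < n)
    (Y : Matrix (Fin n) (Fin n) ℝ) (hYsym : Y.IsSymm) (hYpd : Y.PosDef)
    (hYinvnn : ∀ i j, 0 ≤ Y⁻¹ i j)
    (r ψv υ : Fin n → ℝ)
    (hr : ∀ i, 0 < r i) (hψ : ∀ i, 0 < ψv i) (hυ : ∀ i, 0 < υ i)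
    (R Ψ Υ : Matrix (Fin n) (Fin n) ℝ)
    (hR : R = Matrix.diagonal r) (hΨ : Ψ = Matrix.diagonal ψv)
    (hΥ : Υ = Matrix.diagonal υ)
    (Ud0 : Fin n → ℝ)
    (RDec : Fin n → ℝ)
    (hRDec : RDec = (Υ⁻¹ * ((1 + Y * R)⁻¹ * Y)) *ᵥ Ud0)
    (hRDecpos : ∀ j, 0 < RDec j)
    (rc1 : ℝ)
    (hrc1 : rc1 = ((fun _ => (1 : ℝ)) ⬝ᵥ (Ψ⁻¹ *ᵥ Ud0)) /
      ((fun _ => (1 : ℝ)) ⬝ᵥ (Ψ⁻¹ *ᵥ (((Y⁻¹ + R) * Υ) *ᵥ (fun _ => (1 : ℝ))))))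
    (hrc1nn : 0 ≤ rc1)
    (Rlow Rbar : ℝ)
    (hRlow : Rlow = Finset.univ.inf' ⟨⟨0, hn⟩, Finset.mem_univ _⟩ RDec)
    (hRbar : Rbar = Finset.univ.sup' ⟨⟨0, hn⟩, Finset.mem_univ _⟩ RDec)
    (Uss U : Fin n → ℝ)
    (hUss : Uss = (Y⁻¹ * Υ) *ᵥ RDec)
    (hU : U = rc1 • ((Y⁻¹ * Υ) *ᵥ (fun _ => (1 : ℝ)))) :
    ∀ i, (rc1 / Rbar) * Uss i ≤ U i ∧ U i ≤ (rc1 / Rlow) * Uss i := by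
  have hlow : ∀ j, Rlow ≤ RDec j := fun j => by
    rw [hRlow]; exact Finset.inf'_le _ (Finset.mem_univ j)
  have hbar : ∀ j, RDec j ≤ Rbar := fun j => by
    rw [hRbar]; exact Finset.le_sup' _ (Finset.mem_univ j)
  have hlowpos : 0 < Rlow := by
    rw [hRlow]
    exact (Finset.lt_inf'_iff _).2 fun j _ => hRDecpos j
  have hbarpos : 0 < Rbar := lt_of_lt_of_le (hRDecpos ⟨0, hn⟩) (hbar _)
  have hM : ∀ i j, 0 ≤ (Y⁻¹ * Υ) i j := fun i j => by
    rw [hΥ, Matrix.mul_diagonal]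
    exact mul_nonneg (hYinvnn i j) (hυ j).le
  intro i
  have e1 : Uss i = ∑ j, (Y⁻¹ * Υ) i j * RDec j := by rw [hUss]; rfl
  have e2 : U i = rc1 * ∑ j, (Y⁻¹ * Υ) i j := by
    rw [hU]; simp [Matrix.mulVec, dotProduct]
  have b1 : Uss i ≤ (∑ j, (Y⁻¹ * Υ) i j) * Rbar := by
    rw [e1, Finset.sum_mul]
    exact Finset.sum_le_sum fun j _ => mul_le_mul_of_nonneg_left (hbar j) (hM i j)
  have b2 : (∑ j, (Y⁻¹ * Υ) i j) * Rlow ≤ Uss i := by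
    rw [e1, Finset.sum_mul]
    exact Finset.sum_le_sum fun j _ => mul_le_mul_of_nonneg_left (hlow j) (hM i j)
  rw [e2]
  constructor
  · rw [div_mul_eq_mul_div, div_le_iff₀ hbarpos, mul_assoc]
    exact mul_le_mul_of_nonneg_left b1 hrc1nn
  · rw [div_mul_eq_mul_div, le_div_iff₀ hlowpos, mul_assoc]
    exact mul_le_mul_of_nonneg_left b2 hrc1nn
end

section
/- Let n ≥ 2, let Y be a real symmetric positive definite n×n matrix whose inverse Y⁻¹ has all entries strictly positive, let r > 0, β > 0, set R = rE and Ψ = βE, let Υ = diag(I_1^max,…,I_n^max) with I_k^max > 0, and let Uᵈ(0) ∈ ℝⁿ be entrywise nonnegative and not identically zero. Let λ_n denote the largest eigenvalue of Y and define r_{c1} = 1ₙᵀΨ⁻¹Uᵈ(0) / 1ₙᵀΨ⁻¹(Y⁻¹+R)Υ·1ₙ. Then r_{c1} < ( Σ_k U_k^d(0) / Σ_k I_k^max ) · λ_n/(1 + λ_n·r). -/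
open Matrix

theorem aux_diag_le {n : ℕ} (Y : Matrix (Fin n) (Fin n) ℝ) (hY : Y.IsHermitian) (lam : ℝ)
    (h : ∀ i, hY.eigenvalues i ≤ lam) (j : Fin n) : Y j j ≤ lam := by
  have hs := hY.spectral_theorem
  rw [Unitary.conjStarAlgAut_apply] at hs
  set U : Matrix (Fin n) (Fin n) ℝ := (hY.eigenvectorUnitary : Matrix (Fin n) (Fin n) ℝ) with hU
  have hUU : U * star U = 1 := Unitary.coe_mul_star_self hY.eigenvectorUnitary
  have h1 : ∑ i, U j i * U j i = 1 := by
    have := congrFun (congrFun hUU j) j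
    simpa [Matrix.mul_apply, Matrix.star_apply] using this
  have h2 : Y j j = ∑ i, U j i * hY.eigenvalues i * U j i := by
    have := congrFun (congrFun hs j) j
    rw [this]
    simp [Matrix.mul_apply, Matrix.star_apply, Matrix.diagonal_apply]
  calc Y j j = ∑ i, U j i * hY.eigenvalues i * U j i := h2
    _ ≤ ∑ i, lam * (U j i * U j i) := by
      apply Finset.sum_le_sum
      intro i _
      nlinarith [h i, mul_self_nonneg (U j i), mul_le_mul_of_nonneg_right (h i) (mul_self_nonneg (U j i))]
    _ = lam := by rw [← Finset.mul_sum, h1, mul_one]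

theorem aux_inv_diag {n : ℕ} (Y : Matrix (Fin n) (Fin n) ℝ) (hY : Y.PosDef) (lam : ℝ)
    (hl : 0 < lam) (j : Fin n) (h : Y j j ≤ lam) : 1 / lam ≤ Y⁻¹ j j := by
  have hdet : IsUnit Y.det := hY.det_pos.ne'.isUnit
  have hYY : Y * Y⁻¹ = 1 := Matrix.mul_nonsing_inv _ hdet
  have hYY' : Y⁻¹ * Y = 1 := Matrix.nonsing_inv_mul _ hdet
  set e : Fin n → ℝ := Pi.single j 1 with he
  set t := 1 / lam with ht
  have hsymm : Y⁻¹ᵀ = Y⁻¹ := by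
    have := hY.1.inv
    rw [Matrix.IsHermitian, Matrix.conjTranspose_eq_transpose_of_trivial] at this
    exact this
  have h0 := hY.posSemidef.dotProduct_mulVec_nonneg (Y⁻¹ *ᵥ e - t • e)
  have e1 : (Y⁻¹ *ᵥ e) ⬝ᵥ e = Y⁻¹ j j := by simp [he]
  have e2 : (Y⁻¹ *ᵥ e) ⬝ᵥ (Y *ᵥ e) = 1 := by
    have : Y⁻¹ *ᵥ e = e ᵥ* Y⁻¹ := by rw [← Matrix.vecMul_transpose, hsymm]
    rw [this, Matrix.dotProduct_mulVec, Matrix.vecMul_vecMul, hYY', Matrix.vecMul_one]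
    simp [he]
  have e3 : e ⬝ᵥ (Y *ᵥ e) = Y j j := by simp [he]
  have e4 : e ⬝ᵥ e = 1 := by simp [he]
  have e5 : Y *ᵥ (Y⁻¹ *ᵥ e - t • e) = e - t • (Y *ᵥ e) := by
    rw [Matrix.mulVec_sub, Matrix.mulVec_mulVec, hYY, Matrix.one_mulVec, Matrix.mulVec_smul]
  rw [star_trivial, e5, sub_dotProduct, dotProduct_sub, dotProduct_sub, dotProduct_smul,
    smul_dotProduct, smul_dotProduct, dotProduct_smul, e1, e2, e3, e4] at h0
  simp only [smul_eq_mul] at h0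
  have htl : t * lam = 1 := by rw [ht]; field_simp
  have htp : 0 < t := by positivity
  have : t * (t * Y j j) ≤ t := by
    calc t * (t * Y j j) ≤ t * (t * lam) := by gcongr
      _ = t := by rw [htl, mul_one]
  linarith

/-- Upper bound on the cooperative steady current ratio in terms of the
largest eigenvalue `λₙ` of the conductance matrix `Y`:
`r_{c1} < (Σₖ Uₖᵈ(0) / Σₖ Iₖ^max) · λₙ/(1 + λₙ r)`. -/
theorem cooperative_ratio_upper_bound
    (n : ℕ) (hn : 2 ≤ n)
    (Y : Matrix (Fin n) (Fin n) ℝ) (hYpd : Y.PosDef)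
    (hYinvpos : ∀ i j, 0 < Y⁻¹ i j)
    (r β : ℝ) (hr : 0 < r) (hβ : 0 < β)
    (R Ψ : Matrix (Fin n) (Fin n) ℝ)
    (hR : R = r • (1 : Matrix (Fin n) (Fin n) ℝ))
    (hΨ : Ψ = β • (1 : Matrix (Fin n) (Fin n) ℝ))
    (Imax : Fin n → ℝ) (hImax : ∀ k, 0 < Imax k)
    (Υ : Matrix (Fin n) (Fin n) ℝ) (hΥ : Υ = Matrix.diagonal Imax)
    (Ud0 : Fin n → ℝ) (hUd0nn : ∀ k, 0 ≤ Ud0 k) (hUd0ne : Ud0 ≠ 0)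
    (lam : ℝ)
    (hlam : lam = Finset.univ.sup' ⟨⟨0, by omega⟩, Finset.mem_univ _⟩
      hYpd.1.eigenvalues)
    (rc1 : ℝ)
    (hrc1 : rc1 = ((fun _ => (1 : ℝ)) ⬝ᵥ (Ψ⁻¹ *ᵥ Ud0)) /
      ((fun _ => (1 : ℝ)) ⬝ᵥ (Ψ⁻¹ *ᵥ (((Y⁻¹ + R) * Υ) *ᵥ (fun _ => (1 : ℝ)))))) :
    rc1 < ((∑ k, Ud0 k) / (∑ k, Imax k)) * (lam / (1 + lam * r)) := by
  have hlamge : ∀ i, hYpd.1.eigenvalues i ≤ lam := fun i => by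
    rw [hlam]; exact Finset.le_sup' _ (Finset.mem_univ i)
  have hlp : 0 < lam := lt_of_lt_of_le (hYpd.eigenvalues_pos ⟨0, by omega⟩) (hlamge _)
  have hcol : ∀ j, 1 / lam < ∑ i, Y⁻¹ i j := by
    intro j
    refine lt_of_le_of_lt (aux_inv_diag Y hYpd lam hlp j (aux_diag_le Y hYpd.1 lam hlamge j)) ?_
    haveI : Nontrivial (Fin n) := Fin.nontrivial_iff_two_le.mpr hn
    obtain ⟨k, hk⟩ := exists_ne j
    exact Finset.single_lt_sum hk (Finset.mem_univ j) (Finset.mem_univ k) (hYinvpos k j)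
      (fun i _ _ => (hYinvpos i j).le)
  have hne : (Finset.univ : Finset (Fin n)).Nonempty := ⟨⟨0, by omega⟩, Finset.mem_univ _⟩
  have hI : 0 < ∑ k, Imax k := Finset.sum_pos (fun k _ => hImax k) hne
  have hU : 0 < ∑ k, Ud0 k := by
    obtain ⟨k, hk⟩ := Function.ne_iff.mp hUd0ne
    exact Finset.sum_pos' (fun k _ => hUd0nn k)
      ⟨k, Finset.mem_univ _, lt_of_le_of_ne (hUd0nn k) (Ne.symm hk)⟩
  have hΨi : Ψ⁻¹ = β⁻¹ • (1 : Matrix (Fin n) (Fin n) ℝ) := by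
    apply Matrix.inv_eq_right_inv
    rw [hΨ]; simp [smul_smul, hβ.ne']
  set S := ∑ j, (∑ i, Y⁻¹ i j) * Imax j with hS
  have hSl : (1 / lam) * ∑ k, Imax k < S := by
    rw [Finset.mul_sum]
    exact Finset.sum_lt_sum_of_nonempty hne
      (fun k _ => mul_lt_mul_of_pos_right (hcol k) (hImax k))
  have hnum : (fun _ => (1 : ℝ)) ⬝ᵥ (Ψ⁻¹ *ᵥ Ud0) = β⁻¹ * ∑ k, Ud0 k := by
    rw [hΨi, Matrix.smul_mulVec, Matrix.one_mulVec, dotProduct_smul]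
    simp [dotProduct]
  have hden : (fun _ => (1 : ℝ)) ⬝ᵥ (Ψ⁻¹ *ᵥ (((Y⁻¹ + R) * Υ) *ᵥ (fun _ => (1 : ℝ))))
      = β⁻¹ * (S + r * ∑ k, Imax k) := by
    have hv : Υ *ᵥ (fun _ => (1 : ℝ)) = Imax := by
      rw [hΥ]; ext i; simp [Matrix.mulVec_diagonal]
    rw [hΨi, Matrix.smul_mulVec, Matrix.one_mulVec, dotProduct_smul, ← Matrix.mulVec_mulVec, hv,
      Matrix.add_mulVec, hR, Matrix.smul_mulVec, Matrix.one_mulVec, dotProduct_add,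
      dotProduct_smul, smul_eq_mul, smul_eq_mul]
    congr 2
    · simp only [dotProduct, Matrix.mulVec, one_mul, hS, Finset.sum_mul]
      exact Finset.sum_comm
    · simp [dotProduct]
  rw [hrc1, hnum, hden, mul_div_mul_left _ _ (inv_ne_zero hβ.ne')]
  have hfin : ((∑ k, Ud0 k) / (∑ k, Imax k)) * (lam / (1 + lam * r))
      = (∑ k, Ud0 k) / ((1 / lam) * (∑ k, Imax k) + r * ∑ k, Imax k) := by
    have : 0 < 1 + lam * r := by positivity
    field_simp
  rw [hfin]
  exact div_lt_div_of_pos_left hU (by positivity) (by linarith)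
end

section
/- Let n ≥ 1, let Y_c be a real symmetric n×n matrix with Y_c·1ₙ = 0, let Y_s = diag(G_11,…,G_nn) with G_ii ≥ 0, assume Y = Y_s + Y_c is invertible, and let Υ = diag(I_1^max,…,I_n^max) with I_k^max > 0. Then the steady voltage vector U = r_{c1}·Y⁻¹Υ·1ₙ has all components equal (for r_{c1} ≠ 0), i.e. Y⁻¹Υ·1ₙ is a scalar multiple of 1ₙ, if and only if there exists a positive scalar ε such that Υ = ε·Y_s. -/
open Matrix

/-- The steady voltage vector `Y⁻¹Υ1ₙ` is a scalar multiple of `1ₙ`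
(all nodes share the same output voltage) iff `Υ = ε·Y_s` for some positive scalar `ε`. -/
theorem equal_voltage_iff_maxcurrent_proportional_shunt
    (n : ℕ) (hn : 0 < n)
    (Yc : Matrix (Fin n) (Fin n) ℝ) (hYcsym : Yc.IsSymm)
    (hYc1 : Yc *ᵥ (fun _ => (1 : ℝ)) = 0)
    (G : Fin n → ℝ) (hG : ∀ i, 0 ≤ G i)
    (Ys : Matrix (Fin n) (Fin n) ℝ) (hYs : Ys = Matrix.diagonal G)
    (Y : Matrix (Fin n) (Fin n) ℝ) (hY : Y = Ys + Yc) (hYunit : IsUnit Y.det)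
    (Imax : Fin n → ℝ) (hImax : ∀ k, 0 < Imax k)
    (Υ : Matrix (Fin n) (Fin n) ℝ) (hΥ : Υ = Matrix.diagonal Imax) :
    (∃ c : ℝ, (Y⁻¹ * Υ) *ᵥ (fun _ => (1 : ℝ)) = fun _ => c) ↔
      ∃ ε : ℝ, 0 < ε ∧ Υ = ε • Ys := by
  have hY1 : Y *ᵥ (fun _ => (1 : ℝ)) = G := by
    rw [hY, Matrix.add_mulVec, hYc1, hYs, add_zero]
    ext i
    simp [Matrix.mulVec_diagonal]
  have hU1 : Υ *ᵥ (fun _ => (1 : ℝ)) = Imax := by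
    rw [hΥ]
    ext i
    simp [Matrix.mulVec_diagonal]
  have hc : ∀ c : ℝ, (fun _ : Fin n => c) = c • (fun _ => (1 : ℝ)) := by
    intro c
    ext i
    simp
  constructor
  · rintro ⟨c, h⟩
    have h2 : Imax = c • G := by
      have h3 := congrArg (fun v => Y *ᵥ v) h
      simp only [Matrix.mulVec_mulVec] at h3
      rw [Matrix.mul_nonsing_inv_cancel_left _ _ hYunit, hU1, hc c, Matrix.mulVec_smul, hY1] at h3
      exact h3
    refine ⟨c, ?_, ?_⟩
    · have h4 := hImax ⟨0, hn⟩
      rw [h2, Pi.smul_apply, smul_eq_mul] at h4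
      exact pos_of_mul_pos_left h4 (hG _)
    · rw [hΥ, hYs, h2, Matrix.diagonal_smul]
  · rintro ⟨ε, -, h⟩
    refine ⟨ε, ?_⟩
    have h2 : Imax = ε • G := by
      rw [hΥ, hYs, ← Matrix.diagonal_smul] at h
      exact Matrix.diagonal_injective h
    rw [← Matrix.mulVec_mulVec, hU1, h2, ← hY1, Matrix.mulVec_smul, Matrix.mulVec_mulVec,
      Matrix.nonsing_inv_mul _ hYunit, Matrix.one_mulVec, ← hc]
end
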